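/- arXiv:1801.02585 — 5 statements merged into one kernel-verified Lean document; each statement's English description precedes it below -/
import Mathlib

section
/- Let (D, d_D), (E, d_E), (F, d_F) be cochain complexes of 𝔽₂-modules, and let β : D → F and γ : F → E be degree +1 chain maps. Define the graded module G with G_i = D_{i−1} ⊕ F_{i−1} ⊕ E_i ⊕ F_i and the degree +1 map d_G(x, y, z, w) = (d_D x, β x + d_F y + w, d_E z + γ w, d_F w), and define the graded module K with K_i = D_{i−1} ⊕ E_i and the degree +1 map d_K(x, z) = (d_D x, γ(β x) + d_E z). Then d_G ∘ d_G = 0 and d_K ∘ d_K = 0, and the degree-preserving maps i : K → G, i(x, z) = (x, 0, z, β x), and π : G → K, π(x, y, z, w) = (x, z + γ y), are chain maps: d_G ∘ i = i ∘ d_K and d_K ∘ π = π ∘ d_G. -/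
/-!
Moving all terms of an identity to one side, expanding by linearity and using that `d_D`, `d_E`, `d_F` square to zero and
that `β`, `γ` commute with the differentials, every surviving term occurs an even number of
times, so it vanishes over `𝔽₂`; no signs are needed.
-/

/-- For cochain complexes `(D, d_D)`, `(E, d_E)`, `(F, d_F)` over `𝔽₂` and
degree `+1` chain maps `β : D → F`, `γ : F → E`, the maps
`d_G (x, y, z, w) = (d_D x, β x + d_F y + w, d_E z + γ w, d_F w)` on
`G_i = D_{i-1} ⊕ F_{i-1} ⊕ E_i ⊕ F_i` and `d_K (x, z) = (d_D x, γ (β x) + d_E z)` on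
`K_i = D_{i-1} ⊕ E_i` square to zero, and `i(x,z) = (x, 0, z, β x)`,
`π(x,y,z,w) = (x, z + γ y)` are chain maps.  (Here the piece `G_{i+1}` is represented by
tuples `(x : D i, y : F i, z : E (i+1), w : F (i+1))`, all equalities stated
componentwise.) -/
theorem stmt_3
    (D E F : ℤ → Type*)
    [∀ i, AddCommGroup (D i)] [∀ i, Module (ZMod 2) (D i)]
    [∀ i, AddCommGroup (E i)] [∀ i, Module (ZMod 2) (E i)]
    [∀ i, AddCommGroup (F i)] [∀ i, Module (ZMod 2) (F i)]
    (dD : ∀ i, D i →ₗ[ZMod 2] D (i + 1))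
    (dE : ∀ i, E i →ₗ[ZMod 2] E (i + 1))
    (dF : ∀ i, F i →ₗ[ZMod 2] F (i + 1))
    (hD : ∀ (i : ℤ) (x : D i), dD (i + 1) (dD i x) = 0)
    (hE : ∀ (i : ℤ) (z : E i), dE (i + 1) (dE i z) = 0)
    (hF : ∀ (i : ℤ) (y : F i), dF (i + 1) (dF i y) = 0)
    (β : ∀ i, D i →ₗ[ZMod 2] F (i + 1))
    (hβ : ∀ (i : ℤ) (x : D i), β (i + 1) (dD i x) = dF (i + 1) (β i x))
    (γ : ∀ i, F i →ₗ[ZMod 2] E (i + 1))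
    (hγ : ∀ (i : ℤ) (y : F i), γ (i + 1) (dF i y) = dE (i + 1) (γ i y)) :
    -- d_G ∘ d_G = 0
    (∀ (i : ℤ) (x : D i) (y : F i) (z : E (i + 1)) (w : F (i + 1)),
      dD (i + 1) (dD i x) = 0 ∧
      β (i + 1) (dD i x) + dF (i + 1) (β i x + dF i y + w) + dF (i + 1) w = 0 ∧
      dE (i + 1 + 1) (dE (i + 1) z + γ (i + 1) w) + γ (i + 1 + 1) (dF (i + 1) w) = 0 ∧
      dF (i + 1 + 1) (dF (i + 1) w) = 0) ∧
    -- d_K ∘ d_K = 0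
    (∀ (i : ℤ) (x : D i) (z : E (i + 1)),
      dD (i + 1) (dD i x) = 0 ∧
      γ (i + 1 + 1) (β (i + 1) (dD i x)) +
        dE (i + 1 + 1) (γ (i + 1) (β i x) + dE (i + 1) z) = 0) ∧
    -- d_G ∘ i = i ∘ d_K
    (∀ (i : ℤ) (x : D i) (z : E (i + 1)),
      dD i x = dD i x ∧
      β i x + dF i (0 : F i) + β i x = 0 ∧
      dE (i + 1) z + γ (i + 1) (β i x) = γ (i + 1) (β i x) + dE (i + 1) z ∧
      dF (i + 1) (β i x) = β (i + 1) (dD i x)) ∧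
    -- d_K ∘ π = π ∘ d_G
    (∀ (i : ℤ) (x : D i) (y : F i) (z : E (i + 1)) (w : F (i + 1)),
      dD i x = dD i x ∧
      γ (i + 1) (β i x) + dE (i + 1) (z + γ i y) =
        (dE (i + 1) z + γ (i + 1) w) + γ (i + 1) (β i x + dF i y + w)) := by
  -- In characteristic two every term that occurs twice cancels.
  have cE : ∀ (i : ℤ) (a : E i), a + a = 0 := fun _ a => ZModModule.add_self a
  have cF : ∀ (i : ℤ) (a : F i), a + a = 0 := fun _ a => ZModModule.add_self a
  refine ⟨fun i x y z w => ⟨hD i x, ?_, ?_, hF _ w⟩, fun i x z => ⟨hD i x, ?_⟩,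
    fun i x z => ⟨rfl, ?_, add_comm _ _, (hβ i x).symm⟩, fun i x y z w => ⟨rfl, ?_⟩⟩
  · rw [map_add, map_add, hβ, hF, add_zero, ← add_assoc, cF, zero_add, cF]
  · rw [map_add, hE, hγ, zero_add, cE]
  · rw [map_add, hE, hβ, hγ, add_zero, cE]
  · rw [map_zero, add_zero, cF]
  · rw [map_add, map_add, map_add, hγ]
    -- The two sides differ by the repeated term `γ w`.
    have h := cE _ (γ (i + 1) w)
    calc _ = γ (i + 1) (β i x) + (dE (i + 1) z + dE (i + 1) (γ i y)) +
          (γ (i + 1) w + γ (i + 1) w) := by rw [h, add_zero]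
      _ = _ := by abel
end

section
/- Let n ≥ 1 and let M be an n×n integer matrix whose rank as a real matrix is at least n−1. Suppose there exists u ∈ ℤⁿ with every entry equal to 1 or −1 such that Mᵀu = 0. Let S ⊆ {1, …, n} have even cardinality and let w ∈ ℝⁿ be the vector with w_i = π for i ∈ S and w_i = 0 for i ∉ S. Then there exist θ ∈ ℝⁿ and z ∈ ℤⁿ such that Mθ = w + 2πz; equivalently, the class of w in (ℝ/2πℤ)ⁿ lies in the image of the endomorphism of (ℝ/2πℤ)ⁿ induced by M. -/
open Matrix

/-!
The column span of `M` lies in the hyperplane `u^⊥` because `Mᵀ u = 0`, and it has dimension at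
least `n - 1`, so it equals `u^⊥` (`exists_mulVec_eq_of_dotProduct_eq_zero`). It thus suffices to
choose `z` so that `w + 2πz` is orthogonal to `u`. Every `u i` is odd, so `∑ i ∈ S, u i` has the
parity of `S.card` and is an even number `2k`. A multiple of a single basis vector then serves
as `z`, since the corresponding entry of `u` is a unit of `ℤ`.
-/

/-- If a nonzero `v` is in the left kernel of an `n × n` real matrix of rank at least `n - 1`, then
the column span is all of the hyperplane orthogonal to `v`. -/
theorem exists_mulVec_eq_of_dotProduct_eq_zero {n : ℕ} (A : Matrix (Fin n) (Fin n) ℝ)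
    (hA : n - 1 ≤ A.rank) (v : Fin n → ℝ) (hv : v ≠ 0) (hvA : v ᵥ* A = 0)
    (b : Fin n → ℝ) (hb : v ⬝ᵥ b = 0) : ∃ θ, A *ᵥ θ = b := by
  let f : Module.Dual ℝ (Fin n → ℝ) := dotProductBilin ℝ ℝ v
  have hf_apply : ∀ x, f x = v ⬝ᵥ x := fun _ => rfl
  have hf : f ≠ 0 := by
    intro h
    apply hv
    rw [← dotProduct_self_eq_zero, ← hf_apply, h]
    rfl
  have hle : LinearMap.range A.mulVecLin ≤ LinearMap.ker f := by
    rintro _ ⟨x, rfl⟩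
    rw [LinearMap.mem_ker, hf_apply, mulVecLin_apply, dotProduct_mulVec, hvA, zero_dotProduct]
  have hker := Module.Dual.finrank_ker_add_one_of_ne_zero hf
  rw [Module.finrank_fin_fun] at hker
  have heq := Submodule.eq_of_le_of_finrank_le hle (by
    change _ ≤ A.rank
    omega)
  have hmem : b ∈ LinearMap.range A.mulVecLin := by
    rw [heq, LinearMap.mem_ker, hf_apply, hb]
  exact hmem

/-- Let `M` be an `n × n` integer matrix of real rank at least `n - 1`
admitting a vector `u` with entries `±1` in the kernel of `Mᵀ`.  For any even-cardinality
subset `S` and `w` the vector with `w_i = π` for `i ∈ S` and `0` otherwise, the equation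
`Mθ = w + 2πz` has a solution `θ ∈ ℝⁿ`, `z ∈ ℤⁿ`; i.e. the class of `w` lies in the image
of the endomorphism of `(ℝ/2πℤ)ⁿ` induced by `M`. -/
theorem stmt_12 (n : ℕ) (hn : 1 ≤ n) (M : Matrix (Fin n) (Fin n) ℤ)
    (hrank : n - 1 ≤ (M.map (Int.cast : ℤ → ℝ)).rank)
    (u : Fin n → ℤ) (hu : ∀ i, u i = 1 ∨ u i = -1)
    (hMu : Matrix.mulVec Mᵀ u = 0)
    (S : Finset (Fin n)) (hS : Even S.card) :
    ∃ (θ : Fin n → ℝ) (z : Fin n → ℤ), ∀ i : Fin n,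
      Matrix.mulVec (M.map (Int.cast : ℤ → ℝ)) θ i =
        (if i ∈ S then Real.pi else 0) + 2 * Real.pi * (z i : ℝ) := by
  let i₀ : Fin n := ⟨0, hn⟩
  have hu_odd : ∀ i ∈ S, Odd (u i) := fun i _ => by
    rcases hu i with h | h <;> rw [h] <;> decide
  have hu_sq : u i₀ * u i₀ = 1 := by
    rcases hu i₀ with h | h <;> rw [h] <;> rfl
  have heven : Even (∑ i ∈ S, u i) := by
    have hsum : ∑ i ∈ S, u i = ∑ i ∈ S, (u i - 1) + (S.card : ℤ) := by
      simp [Finset.sum_sub_distrib]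
    rw [hsum]
    refine Even.add (Finset.even_sum _ fun i hi => ?_) (by exact_mod_cast hS)
    exact (hu_odd i hi).sub_odd odd_one
  obtain ⟨k, hk⟩ := heven
  -- Since `u i₀ * u i₀ = 1`, this choice has `u ⬝ᵥ z = -k`, cancelling half of `∑ i ∈ S, u i`.
  let z : Fin n → ℤ := Pi.single i₀ (-k * u i₀)
  have hz : ∑ i, u i * z i = -k := by
    change u ⬝ᵥ Pi.single i₀ (-k * u i₀) = -k
    rw [dotProduct_single]
    linear_combination (-k) * hu_sq
  have hzR : ∑ i, (u i : ℝ) * (z i : ℝ) = -k := by exact_mod_cast hz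
  have hkR : ∑ i ∈ S, (u i : ℝ) = k + k := by exact_mod_cast hk
  obtain ⟨θ, hθ⟩ := exists_mulVec_eq_of_dotProduct_eq_zero (M.map (Int.cast : ℤ → ℝ)) hrank
    (fun i => (u i : ℝ))
    (by
      intro h
      have h0 : (u i₀ : ℝ) = 0 := congrFun h i₀
      have h1 : u i₀ = 0 := by exact_mod_cast h0
      rw [h1] at hu_sq
      simp at hu_sq)
    (by
      ext j
      have h := congrFun hMu j
      rw [mulVec_transpose] at h
      simp only [vecMul, dotProduct, Pi.zero_apply, map_apply] at h ⊢
      exact_mod_cast h)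
    (fun i => (if i ∈ S then Real.pi else 0) + 2 * Real.pi * (z i : ℝ))
    (by
      have hsplit : ∀ i, (u i : ℝ) * ((if i ∈ S then Real.pi else 0) + 2 * Real.pi * (z i : ℝ)) =
          (if i ∈ S then (u i : ℝ) else 0) * Real.pi
            + ((u i : ℝ) * (z i : ℝ)) * (2 * Real.pi) := by
        intro i
        split_ifs <;> ring
      simp only [dotProduct, hsplit]
      rw [Finset.sum_add_distrib, ← Finset.sum_mul, ← Finset.sum_mul, hzR,
        Finset.sum_ite_mem, Finset.univ_inter, hkR]
      ring)
  exact ⟨θ, z, fun i => congrFun hθ i⟩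
end

section
/- Let n ≥ 2 and let M be an n×n integer matrix whose rank as a real matrix is at most n−2. Let S be a nonempty proper subset of {1, …, n}, and suppose that the kernel of the reduction of M modulo 2, as a linear map (𝔽₂)ⁿ → (𝔽₂)ⁿ, equals the 𝔽₂-linear span of the indicator vectors 1_S and 1_{Sᶜ}. Then there exists u ∈ ℤⁿ with Mu = 0 such that u_i is odd for every i ∈ S and u_i is even for every i ∉ S. -/
open Matrix

/-!
The integer kernel `K` of `M` is free, of rank `n - rank M ≥ 2`. It is saturated: if `2 v ∈ K`
then `v ∈ K`. Hence reduction modulo 2 embeds `K / 2K` into the kernel of `M mod 2`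
(`linearIndependent_mod_two`), so its image has dimension at least 2. By hypothesis that kernel is
spanned by two vectors, so every vector in it, in particular `1_S`, is the reduction of some `u`
in `K`. The rank bound over `ℤ` comes from the real one because integer vectors that are linearly
independent over `ℤ` stay so over `ℝ` (`finrank_range_int_le`).
-/

/-- The integer column span of `M` has rank at most the real rank of `M`. -/
lemma finrank_range_int_le {n : ℕ} (M : Matrix (Fin n) (Fin n) ℤ) :
    Module.finrank ℤ (LinearMap.range M.mulVecLin) ≤
      (M.map (Int.cast : ℤ → ℝ)).rank := by
  let b := Module.finBasis ℤ (LinearMap.range M.mulVecLin)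
  have hb : LinearIndependent ℤ (fun i => (b i : Fin n → ℤ)) :=
    b.linearIndependent.map' (Submodule.subtype _) (Submodule.ker_subtype _)
  have hb' : LinearIndependent ℝ (fun i => (algebraMap ℤ ℝ) ∘ (b i : Fin n → ℤ)) :=
    linearIndependent_algebraMap_comp_iff.2 hb
  have hmem : ∀ i, (algebraMap ℤ ℝ) ∘ (b i : Fin n → ℤ) ∈
      LinearMap.range (M.map (Int.cast : ℤ → ℝ)).mulVecLin := by
    intro i
    obtain ⟨x, hx⟩ := (b i).2
    refine ⟨fun j => (x j : ℝ), ?_⟩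
    rw [← hx]
    ext j
    simp [Matrix.mulVec, dotProduct]
  have h := (LinearIndependent.of_comp (v := fun i => (⟨_, hmem i⟩ :
      LinearMap.range (M.map (Int.cast : ℤ → ℝ)).mulVecLin))
      (Submodule.subtype _) hb').fintype_card_le_finrank
  simpa [Matrix.rank] using h

/-- A `ℤ`-basis of the integer kernel of `M` stays linearly independent modulo 2: a combination
that vanishes modulo 2 is twice an integer vector, which is again in the kernel. -/
lemma linearIndependent_mod_two {n k : ℕ} (M : Matrix (Fin n) (Fin n) ℤ)
    (b : Module.Basis (Fin k) ℤ (LinearMap.ker M.mulVecLin)) :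
    LinearIndependent (ZMod 2) (fun i => fun j => (((b i : Fin n → ℤ) j : ℤ) : ZMod 2)) := by
  rw [Fintype.linearIndependent_iff]
  intro g hg
  choose c hc using fun i => ZMod.intCast_surjective (g i)
  set w := ∑ i, c i • b i with hw
  have hdvd : ∀ j, (2 : ℤ) ∣ (w : Fin n → ℤ) j := by
    intro j
    rw [← Nat.cast_ofNat, ← ZMod.intCast_zmod_eq_zero_iff_dvd]
    have := congrFun hg j
    simpa [hw, hc, Finset.sum_apply] using this
  choose v hv using hdvd
  have hwv : (w : Fin n → ℤ) = (2 : ℤ) • v := by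
    ext j
    simp [hv]
  have hvK : v ∈ LinearMap.ker M.mulVecLin := by
    have h := w.2
    rw [hwv, LinearMap.mem_ker, map_smul] at h
    exact (smul_eq_zero.1 h).resolve_left two_ne_zero
  have hw2 : w = (2 : ℤ) • (⟨v, hvK⟩ : LinearMap.ker M.mulVecLin) := Subtype.ext hwv
  intro i
  have hci : c i = 2 * b.repr ⟨v, hvK⟩ i := by
    have h1 : b.repr w i = c i := by
      rw [hw, b.repr_sum_self]
    rw [← h1, hw2, map_smul, Finsupp.smul_apply, smul_eq_mul]
  rw [← hc, hci, Int.cast_mul]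
  have : ((2 : ℤ) : ZMod 2) = 0 := by decide
  rw [this, zero_mul]

/-- Let `M` be an `n × n` integer matrix (`n ≥ 2`) of real rank at most
`n - 2`, and `S` a nonempty proper subset of the index set such that the kernel of
`M mod 2` is spanned by the indicator vectors of `S` and its complement.  Then there is
`u ∈ ℤⁿ` with `Mu = 0`, `u_i` odd on `S` and even off `S`. -/
theorem stmt_14 (n : ℕ) (hn : 2 ≤ n) (M : Matrix (Fin n) (Fin n) ℤ)
    (hrank : (M.map (Int.cast : ℤ → ℝ)).rank ≤ n - 2)
    (S : Finset (Fin n)) (hS : S.Nonempty) (hS' : S ≠ Finset.univ)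
    (hker : LinearMap.ker (Matrix.mulVecLin (M.map (Int.cast : ℤ → ZMod 2))) =
      Submodule.span (ZMod 2)
        ({fun i => if i ∈ S then 1 else 0, fun i => if i ∈ S then 0 else 1} :
          Set (Fin n → ZMod 2))) :
    ∃ u : Fin n → ℤ, Matrix.mulVec M u = 0 ∧
      (∀ i ∈ S, Odd (u i)) ∧ (∀ i ∉ S, Even (u i)) := by
  have hk : 2 ≤ Module.finrank ℤ (LinearMap.ker M.mulVecLin) := by
    have h1 := finrank_range_int_le M
    have h2 := Submodule.finrank_quotient_add_finrank (LinearMap.ker M.mulVecLin)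
    rw [M.mulVecLin.quotKerEquivRange.finrank_eq, Module.finrank_fin_fun] at h2
    omega
  let b := Module.finBasis ℤ (LinearMap.ker M.mulVecLin)
  let r : Fin (Module.finrank ℤ (LinearMap.ker M.mulVecLin)) → Fin n → ZMod 2 :=
    fun i => fun j => (((b i : Fin n → ℤ) j : ℤ) : ZMod 2)
  have hr : LinearIndependent (ZMod 2) r := linearIndependent_mod_two M b
  have hle : Submodule.span (ZMod 2) (Set.range r) ≤
      LinearMap.ker (Matrix.mulVecLin (M.map (Int.cast : ℤ → ZMod 2))) := by
    rw [Submodule.span_le]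
    rintro _ ⟨i, rfl⟩
    have h := (b i).2
    rw [LinearMap.mem_ker] at h
    rw [SetLike.mem_coe, LinearMap.mem_ker]
    ext j
    have hj := congrArg (Int.cast : ℤ → ZMod 2) (congrFun h j)
    simp only [Matrix.mulVecLin_apply, Matrix.mulVec, dotProduct, Int.cast_sum, Int.cast_mul,
      Pi.zero_apply, Int.cast_zero] at hj
    simpa [Matrix.mulVec, dotProduct, r] using hj
  have hdim : Module.finrank (ZMod 2)
      (LinearMap.ker (Matrix.mulVecLin (M.map (Int.cast : ℤ → ZMod 2)))) ≤ 2 := by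
    rw [hker]
    classical
    refine le_trans (finrank_span_le_card _) ?_
    rw [← Set.ncard_eq_toFinset_card']
    exact (Set.ncard_insert_le _ _).trans (by rw [Set.ncard_singleton])
  have heq := Submodule.eq_of_le_of_finrank_le hle (by
    rw [finrank_span_eq_card hr, Fintype.card_fin]
    exact hdim.trans hk)
  have hmem : (fun i => if i ∈ S then 1 else 0 : Fin n → ZMod 2) ∈
      Submodule.span (ZMod 2) (Set.range r) := by
    rw [heq, hker]
    exact Submodule.subset_span (Set.mem_insert _ _)
  obtain ⟨g, hg⟩ := (Submodule.mem_span_range_iff_exists_fun _).1 hmem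
  choose c hc using fun i => ZMod.intCast_surjective (g i)
  have hu : ∀ j, ((((∑ i, c i • b i : LinearMap.ker M.mulVecLin) : Fin n → ℤ) j : ℤ) : ZMod 2) =
      if j ∈ S then 1 else 0 := by
    intro j
    have := congrFun hg j
    simpa [hc, Finset.sum_apply, r] using this
  refine ⟨(∑ i, c i • b i : LinearMap.ker M.mulVecLin), ?_, fun j hj => ?_, fun j hj => ?_⟩
  · exact (∑ i, c i • b i : LinearMap.ker M.mulVecLin).2
  · have := hu j
    rw [if_pos hj] at this
    exact (ZMod.intCast_eq_one_iff_odd).1 this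
  · have := hu j
    rw [if_neg hj] at this
    exact (ZMod.intCast_eq_zero_iff_even).1 this
end

section
/- Let n ≥ 2 and let M be an n×n integer matrix whose rank as a real matrix is at most n−2. Let S be a nonempty proper subset of {1, …, n}, and suppose that the kernel of the reduction of the transpose Mᵀ modulo 2, as a linear map (𝔽₂)ⁿ → (𝔽₂)ⁿ, equals the 𝔽₂-linear span of the indicator vectors 1_S and 1_{Sᶜ}. Let a ∈ S and b ∉ S. Then there exist no θ ∈ ℝⁿ and z ∈ ℤⁿ with Mθ = π·(e_a + e_b) + 2πz, where e_a, e_b are standard basis vectors; equivalently, the class of π·(e_a + e_b) in (ℝ/2πℤ)ⁿ does not lie in the image of the endomorphism of (ℝ/2πℤ)ⁿ induced by M. -/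
/-!
If `Mθ = π w` with `w = e_a + e_b + 2z`, then pairing with any integer vector `v` in the left
kernel `L = ker Mᵀ ⊆ ℤⁿ` gives `v ⬝ w = 0`, so `v a + v b` is even. The reduction of `v` mod 2 lies
in `ker (Mᵀ mod 2)`, which is spanned by `1_S` and `1_{Sᶜ}`; as `v` then has the same parity at
`a ∈ S` and at `b ∉ S`, all entries of `v` have one and the same parity.

On the other hand `L` has rank at least `2` (`two_le_finrank_ker`, which uses that the integer rank
of `Mᵀ` is at most the real rank of `M`), and `L` is saturated in `ℤⁿ`: if `2x ∈ L` then `x ∈ L`.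
So for two members `u₀, u₁` of a `ℤ`-basis of `L`, none of `u₀`, `u₁`, `u₀ + u₁` is divisible by
`2` in `ℤⁿ`. But `u₀` and `u₁` must then both be odd in every entry, so `u₀ + u₁` is even.
-/

open Matrix

lemma le_finrank_of_linearIndependent {n r : ℕ} (W : Submodule ℝ (Fin n → ℝ))
    (f : Fin r → Fin n → ℝ) (hf : LinearIndependent ℝ f) (hW : ∀ i, f i ∈ W) :
    r ≤ Module.finrank ℝ W := by
  have h : LinearIndependent ℝ (fun i => (⟨f i, hW i⟩ : W)) := LinearIndependent.of_comp W.subtype hf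
  simpa using h.fintype_card_le_finrank

/-- A `ℤ`-basis of the image of an integer matrix stays independent over `ℝ`, inside the real
column space. -/
lemma finrank_range_le_rank_map {n : ℕ} (A : Matrix (Fin n) (Fin n) ℤ) :
    Module.finrank ℤ (LinearMap.range A.mulVecLin) ≤ (A.map (Int.cast : ℤ → ℝ)).rank := by
  obtain ⟨c⟩ := Nonempty.intro (Module.finBasis ℤ (LinearMap.range A.mulVecLin))
  have hc : LinearIndependent ℤ (fun i => (c i : Fin n → ℤ)) :=
    c.linearIndependent.map' (Submodule.subtype _) (Submodule.ker_subtype _)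
  have hc' := (linearIndependent_algebraMap_comp_iff (S := ℝ)).2 hc
  have hmem : ∀ i, (algebraMap ℤ ℝ ∘ (c i : Fin n → ℤ)) ∈
      LinearMap.range (A.map (Int.cast : ℤ → ℝ)).mulVecLin := by
    intro i
    obtain ⟨x, hx⟩ := (c i).2
    refine ⟨fun j => (x j : ℝ), ?_⟩
    rw [← hx]
    ext k
    simp [Matrix.mulVec, dotProduct]
  exact le_finrank_of_linearIndependent _ _ hc' hmem

lemma two_le_finrank_ker {n : ℕ} (hn : 2 ≤ n) (M : Matrix (Fin n) (Fin n) ℤ)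
    (hrank : (M.map (Int.cast : ℤ → ℝ)).rank ≤ n - 2) :
    2 ≤ Module.finrank ℤ (LinearMap.ker Mᵀ.mulVecLin) := by
  have h1 := finrank_range_le_rank_map Mᵀ
  rw [Matrix.transpose_map, Matrix.rank_transpose] at h1
  have h2 := (LinearMap.ker Mᵀ.mulVecLin).finrank_quotient_add_finrank
  rw [LinearEquiv.finrank_eq Mᵀ.mulVecLin.quotKerEquivRange] at h2
  simp only [Module.finrank_fin_fun] at h2
  omega

/-- Saturation of the kernel: an integer combination of kernel basis vectors that is even in every
entry has even coefficients. -/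
lemma even_repr_of_even {n : ℕ} (A : Matrix (Fin n) (Fin n) ℤ) {ι : Type*}
    (c : Module.Basis ι ℤ (LinearMap.ker A.mulVecLin)) (v : LinearMap.ker A.mulVecLin)
    (hv : ∀ i, (2 : ℤ) ∣ (v : Fin n → ℤ) i) (k : ι) : (2 : ℤ) ∣ c.repr v k := by
  choose x hx using hv
  have hvx : (v : Fin n → ℤ) = (2 : ℤ) • x := by
    ext i
    simp [hx i]
  have hxk : x ∈ LinearMap.ker A.mulVecLin := by
    have h := v.2
    rw [hvx, LinearMap.mem_ker, map_smul] at h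
    rw [LinearMap.mem_ker]
    exact (smul_eq_zero.1 h).resolve_left (by norm_num)
  have : v = (2 : ℤ) • (⟨x, hxk⟩ : LinearMap.ker A.mulVecLin) := Subtype.ext hvx
  rw [this]
  exact ⟨c.repr ⟨x, hxk⟩ k, by rw [map_smul]; rfl⟩

/-- Solvability of `Mθ = π(e_a + e_b) + 2πz` forces every left kernel vector to have entries of
equal parity at `a` and `b`: pair the equation with the vector. -/
lemma even_add_of_solution {n : ℕ} (M : Matrix (Fin n) (Fin n) ℤ) (a b : Fin n)
    (θ : Fin n → ℝ) (z : Fin n → ℤ)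
    (h : ∀ i : Fin n, Matrix.mulVec (M.map (Int.cast : ℤ → ℝ)) θ i =
        Real.pi * ((if i = a then 1 else 0) + (if i = b then 1 else 0)) +
          2 * Real.pi * (z i : ℝ))
    (v : Fin n → ℤ) (hv : Mᵀ *ᵥ v = 0) : (2 : ℤ) ∣ v a + v b := by
  have hvR : (fun i => (v i : ℝ)) ᵥ* (M.map (Int.cast : ℤ → ℝ)) = 0 := by
    ext j
    have := congrFun hv j
    simp only [Matrix.mulVec, dotProduct, Matrix.transpose_apply, Pi.zero_apply] at this
    have h' : ((∑ i, M i j * v i : ℤ) : ℝ) = 0 := by rw [this]; simp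
    push_cast at h'
    simpa [Matrix.vecMul, dotProduct, mul_comm] using h'
  have h0 : (fun i => (v i : ℝ)) ⬝ᵥ ((M.map (Int.cast : ℤ → ℝ)) *ᵥ θ) = 0 := by
    rw [Matrix.dotProduct_mulVec, hvR, zero_dotProduct]
  rw [funext h] at h0
  have h1 : Real.pi * (((v a + v b + 2 * ∑ i, v i * z i : ℤ)) : ℝ) = 0 := by
    rw [← h0]
    push_cast
    simp only [dotProduct, mul_add, Finset.sum_add_distrib, mul_ite, mul_one, mul_zero,
      Finset.sum_ite_eq', Finset.mem_univ, if_true, Finset.mul_sum]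
    congr 1
    · ring
    · exact Finset.sum_congr rfl fun i _ => by ring
  have h2 : v a + v b + 2 * ∑ i, v i * z i = 0 := by
    exact_mod_cast (mul_eq_zero.1 h1).resolve_left Real.pi_ne_zero
  exact ⟨-∑ i, v i * z i, by linarith⟩

/-- Let `M` be an `n × n` integer matrix (`n ≥ 2`) of real rank at most
`n - 2`, `S` a nonempty proper subset of indices with the kernel of `Mᵀ mod 2` spanned
by the indicators of `S` and its complement, and `a ∈ S`, `b ∉ S`.  Then there are no
`θ ∈ ℝⁿ`, `z ∈ ℤⁿ` with `Mθ = π(e_a + e_b) + 2πz`; i.e. the class of `π(e_a + e_b)`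
in `(ℝ/2πℤ)ⁿ` is not in the image of the endomorphism induced by `M`. -/
theorem stmt_16 (n : ℕ) (hn : 2 ≤ n) (M : Matrix (Fin n) (Fin n) ℤ)
    (hrank : (M.map (Int.cast : ℤ → ℝ)).rank ≤ n - 2)
    (S : Finset (Fin n)) (hS : S.Nonempty) (hS' : S ≠ Finset.univ)
    (hker : LinearMap.ker (Matrix.mulVecLin (Mᵀ.map (Int.cast : ℤ → ZMod 2))) =
      Submodule.span (ZMod 2)
        ({fun i => if i ∈ S then 1 else 0, fun i => if i ∈ S then 0 else 1} :
          Set (Fin n → ZMod 2)))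
    (a b : Fin n) (ha : a ∈ S) (hb : b ∉ S) :
    ¬ ∃ (θ : Fin n → ℝ) (z : Fin n → ℤ), ∀ i : Fin n,
      Matrix.mulVec (M.map (Int.cast : ℤ → ℝ)) θ i =
        Real.pi * ((if i = a then 1 else 0) + (if i = b then 1 else 0)) +
          2 * Real.pi * (z i : ℝ) := by
  rintro ⟨θ, z, h⟩
  have key : ∀ v ∈ LinearMap.ker Mᵀ.mulVecLin, ∀ i, (v i : ZMod 2) = v a := by
    intro v hv i
    rw [LinearMap.mem_ker, Matrix.mulVecLin_apply] at hv
    have hpar : (v a : ZMod 2) + v b = 0 := by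
      have := (ZMod.intCast_zmod_eq_zero_iff_dvd (v a + v b) 2).2
        (by exact_mod_cast even_add_of_solution M a b θ z h v hv)
      exact_mod_cast this
    have hmem : (fun i => (v i : ZMod 2)) ∈
        LinearMap.ker (Matrix.mulVecLin (Mᵀ.map (Int.cast : ℤ → ZMod 2))) := by
      rw [LinearMap.mem_ker]
      ext j
      have := congrArg (Int.cast : ℤ → ZMod 2) (congrFun hv j)
      simpa [Matrix.mulVec, dotProduct] using this
    rw [hker, Submodule.mem_span_pair] at hmem
    obtain ⟨α, β, hαβ⟩ := hmem
    have hva : α = v a := by simpa [ha] using congrFun hαβ a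
    have hvb : β = v b := by simpa [hb] using congrFun hαβ b
    have hvi := congrFun hαβ i
    have hab : α = β := by
      rw [hva, hvb]
      exact CharTwo.add_eq_zero.1 hpar
    by_cases hi : i ∈ S
    · rw [← hva]; simpa [hi] using hvi.symm
    · rw [← hva, hab]; simpa [hi] using hvi.symm
  have h2 := two_le_finrank_ker hn M hrank
  obtain ⟨c⟩ := Nonempty.intro (Module.finBasis ℤ (LinearMap.ker Mᵀ.mulVecLin))
  let k₀ : Fin (Module.finrank ℤ (LinearMap.ker Mᵀ.mulVecLin)) := ⟨0, by omega⟩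
  let k₁ : Fin (Module.finrank ℤ (LinearMap.ker Mᵀ.mulVecLin)) := ⟨1, by omega⟩
  have hk : k₁ ≠ k₀ := by simp [k₀, k₁]
  have hodd : ∀ v : LinearMap.ker Mᵀ.mulVecLin, ∀ k, c.repr v k = 1 →
      ((v : Fin n → ℤ) a : ZMod 2) = 1 := by
    intro v k hvk
    by_contra hne
    have hz : ((v : Fin n → ℤ) a : ZMod 2) = 0 := by
      generalize ((v : Fin n → ℤ) a : ZMod 2) = t at hne
      revert t; decide
    have := even_repr_of_even Mᵀ c v (fun i => by
      have := (key v v.2 i).trans hz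
      exact_mod_cast (ZMod.intCast_zmod_eq_zero_iff_dvd _ 2).1 this) k
    rw [hvk] at this
    norm_num at this
  have e₀ := hodd (c k₀) k₀ (by simp)
  have e₁ := hodd (c k₁) k₁ (by simp)
  have e₂ := hodd (c k₀ + c k₁) k₀ (by simp [hk])
  simp only [Submodule.coe_add, Pi.add_apply, Int.cast_add, e₀, e₁] at e₂
  exact absurd e₂ (by decide)
end

section
/- Let (C_i)_{i∈ℤ} and (C''_i)_{i∈ℤ} be families of 𝔽₂-modules, nonzero for only finitely many i, and set C'_i = C_i ⊕ C''_i. Let d' be a differential on C' = ⊕_i C'_i that strictly increases the grading (d'(C'_i) ⊆ ⊕_{j≥i+1} C'_j) with d' ∘ d' = 0, and suppose C'' = ⊕_i (0 ⊕ C''_i) is a subcomplex (d'(C'') ⊆ C''). Let d be the induced differential on the quotient C ≅ C'/C'' and let h : C' → C be the projection (a chain map). For x in the filtration level F_p = ⊕_{i≥p} of a filtered complex, write ∂_{p+j}(x) for the component in grading p+j of the differential applied to x; say a filtered complex "collapses at the E₂ page" if for every r ≥ 2, every p, and every x ∈ F_p with ∂_{p+1}x = ∂_{p+2}x = ⋯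 = ∂_{p+r−1}x = 0, there exists y ∈ F_{p+1} with ∂_{p+2}y = ⋯ = ∂_{p+r−1}y = 0 and ∂_{p+r}y = ∂_{p+r}x. Suppose there is a grading-preserving linear map g : C → C' with h ∘ g = id_C and ∂'_1 ∘ g = g ∘ ∂_1, where ∂_1, ∂'_1 denote the grading-degree-1 components of d and d' respectively. Then if (C', d') collapses at the E₂ page, so does (C, d). -/
/-!
Collapse at the E₂ page implies that an element of `F_p` whose differential
vanishes in grading `p + 1` can be altered by elements of `F_{p+1}` so that its differential
vanishes to arbitrarily high order (`CollapsesAtE2.exists_extension`). Given `x ∈ F_p` with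
`d x ∈ F_{p+r}`, `r ≥ 2`, its leading part `x_p` satisfies `∂₁ x_p = 0`, hence
`∂'₁ (g x_p) = g (∂₁ x_p) = 0`. Extending `g x_p` in `C'` to `z` with `d' z ∈ F_{p+r+1}` and
projecting gives `h z ∈ F_p` with the same leading part as `x` and `d (h z) ∈ F_{p+r+1}`;
then `y = x - h z` is the required element of `F_{p+1}`.
-/


/-- A filtered complex (modelled as a graded `𝔽₂`-module `⨁ᵢ Cᵢ`, with elements given as
dependent functions, filtered by `F_p = ⨁_{i ≥ p} Cᵢ`, with total differential `d`)
"collapses at the E₂ page" if for every `r ≥ 2`, every `p` and every `x ∈ F_p` with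
`∂_{p+1} x = ⋯ = ∂_{p+r-1} x = 0` there is `y ∈ F_{p+1}` with
`∂_{p+2} y = ⋯ = ∂_{p+r-1} y = 0` and `∂_{p+r} y = ∂_{p+r} x`, where `∂_k x` denotes
the grading-`k` component of `d x`. -/
def CollapsesAtE2 {C : ℤ → Type*} [∀ i, AddCommGroup (C i)] [∀ i, Module (ZMod 2) (C i)]
    (d : (∀ i, C i) →ₗ[ZMod 2] (∀ i, C i)) : Prop :=
  ∀ r : ℤ, 2 ≤ r → ∀ p : ℤ, ∀ x : ∀ i, C i, (∀ i, i < p → x i = 0) →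
    (∀ j : ℤ, 1 ≤ j → j ≤ r - 1 → d x (p + j) = 0) →
    ∃ y : ∀ i, C i, (∀ i, i < p + 1 → y i = 0) ∧
      (∀ j : ℤ, 2 ≤ j → j ≤ r - 1 → d y (p + j) = 0) ∧
      d y (p + r) = d x (p + r)

/-- When all differentials from the E₂ page on vanish, the leading part of an element of `F_p`
that survives to E₂ has representatives with differential in arbitrarily deep filtration: the
element `y` supplied by the collapse for `r = n + 2` is subtracted to pass from `n` to `n + 1`. -/
theorem CollapsesAtE2.exists_extension {C : ℤ → Type*} [∀ i, AddCommGroup (C i)]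
    [∀ i, Module (ZMod 2) (C i)] {d : (∀ i, C i) →ₗ[ZMod 2] (∀ i, C i)}
    (hcol : CollapsesAtE2 d)
    (hincr : ∀ (p : ℤ) (x : ∀ i, C i), (∀ i, i < p → x i = 0) → ∀ i, i < p + 1 → d x i = 0)
    (p : ℤ) (x : ∀ i, C i) (hx : ∀ i, i < p → x i = 0) (hdx : d x (p + 1) = 0) (n : ℕ) :
    ∃ z : ∀ i, C i, (∀ i, i < p → z i = 0) ∧ z p = x p ∧
      ∀ j : ℤ, 1 ≤ j → j ≤ n + 1 → d z (p + j) = 0 := by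
  induction n with
  | zero =>
    refine ⟨x, hx, rfl, fun j h1 h2 => ?_⟩
    obtain rfl : j = 1 := by push_cast at h2; omega
    exact hdx
  | succ n ih =>
    obtain ⟨z, hz, hzp, hdz⟩ := ih
    obtain ⟨y, hy, hdy, hdyr⟩ := hcol (n + 2) (by omega) p z hz
      (fun j h1 h2 => hdz j h1 (by omega))
    refine ⟨z - y, fun i hi => ?_, ?_, fun j h1 h2 => ?_⟩
    · simp [hz i hi, hy i (by omega)]
    · simp [hzp, hy p (by omega)]
    · push_cast at h2
      rw [map_sub, Pi.sub_apply]
      rcases eq_or_ne j (n + 2) with rfl | hj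
      · rw [hdyr, sub_self]
      · rw [hdz j h1 (by omega), zero_sub, neg_eq_zero]
        rcases eq_or_ne j 1 with rfl | hj1
        · exact hincr (p + 1) y hy _ (by omega)
        · exact hdy j (by omega) (by omega)

/-- Let `C'ᵢ = Cᵢ ⊕ C''ᵢ` (finitely many nonzero pieces) with differential
`d'` strictly increasing the grading, squaring to zero, with `C''` a subcomplex; let `d`
be the induced differential on the quotient `C ≅ C'/C''` (characterized by
`h ∘ d' = d ∘ h` for the projection `h`), and suppose there is a grading-preserving
linear section `g` of `h` intertwining the grading-degree-`1` parts of the differentials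
(`∂'₁ ∘ g = g ∘ ∂₁`, stated on homogeneous elements).  If `(C', d')` collapses at the E₂
page, then so does `(C, d)`. -/
theorem stmt_17 (C C'' : ℤ → Type*)
    [∀ i, AddCommGroup (C i)] [∀ i, Module (ZMod 2) (C i)]
    [∀ i, AddCommGroup (C'' i)] [∀ i, Module (ZMod 2) (C'' i)]
    (hfin : Set.Finite {i : ℤ | ∃ v : C i × C'' i, v ≠ 0})
    (d' : (∀ i, C i × C'' i) →ₗ[ZMod 2] (∀ i, C i × C'' i))
    (hd'incr : ∀ (p : ℤ) (x : ∀ i, C i × C'' i),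
      (∀ i, i < p → x i = 0) → ∀ i, i < p + 1 → d' x i = 0)
    (hd'sq : ∀ x, d' (d' x) = 0)
    (hsub : ∀ x : ∀ i, C i × C'' i, (∀ i, (x i).1 = 0) → ∀ i, (d' x i).1 = 0)
    (d : (∀ i, C i) →ₗ[ZMod 2] (∀ i, C i))
    (hd : ∀ x : ∀ i, C i × C'' i,
      d (fun i => (x i).1) = fun i => (d' x i).1)
    (g : (∀ i, C i) →ₗ[ZMod 2] (∀ i, C i × C'' i))
    (hg_grading : ∀ (x : ∀ i, C i) (i : ℤ), x i = 0 → g x i = 0)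
    (hg_section : ∀ x : ∀ i, C i, (fun i => (g x i).1) = x)
    (hg_chain1 : ∀ (x : ∀ i, C i) (p : ℤ), (∀ i, i ≠ p → x i = 0) →
      d' (g x) (p + 1) = g (fun i => if i = p + 1 then d x i else 0) (p + 1))
    (hcol : CollapsesAtE2 d') :
    CollapsesAtE2 d := by
  intro r hr p x hx hdx
  have hincr : ∀ (q : ℤ) (u : ∀ i, C i), (∀ i, i < q → u i = 0) →
      ∀ i, i < q + 1 → d u i = 0 := by
    intro q u hu i hi
    have h := congrFun (hd (fun i => (u i, 0))) i
    rw [hd'incr q (fun i => (u i, 0)) (fun k hk => by simp [hu k hk]) i hi] at h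
    exact h
  have hlead : d (Pi.single p (x p)) (p + 1) = 0 := by
    have h := hincr (p + 1) (x - Pi.single p (x p)) (fun i hi => by
      rcases eq_or_ne i p with rfl | hip
      · simp
      · simp [hip, hx i (by omega)]) (p + 1) (by omega)
    rw [map_sub, Pi.sub_apply, hdx 1 le_rfl (by omega), zero_sub, neg_eq_zero] at h
    exact h
  have hlead' : d' (g (Pi.single p (x p))) (p + 1) = 0 := by
    rw [hg_chain1 _ p (fun i hi => Pi.single_eq_of_ne hi _)]
    exact hg_grading _ _ (by simp [hlead])
  obtain ⟨z, hz, hzp, hdz⟩ := hcol.exists_extension hd'incr p (g (Pi.single p (x p)))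
    (fun i hi => hg_grading _ _ (Pi.single_eq_of_ne (by omega) _)) hlead' r.toNat
  have hzx : (z p).1 = x p := by
    rw [hzp]
    simpa using congrFun (hg_section (Pi.single p (x p))) p
  have hdh : ∀ j : ℤ, 1 ≤ j → j ≤ r → d (fun i => (z i).1) (p + j) = 0 := by
    intro j h1 h2
    rw [hd z]
    simp [hdz j h1 (by omega)]
  refine ⟨x - fun i => (z i).1, fun i hi => ?_, fun j h1 h2 => ?_, ?_⟩
  · rcases eq_or_ne i p with rfl | hip
    · simp [hzx]
    · simp [hx i (by omega), hz i (by omega)]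
  · rw [map_sub, Pi.sub_apply, hdx j (by omega) h2, hdh j (by omega) (by omega), sub_zero]
  · rw [map_sub, Pi.sub_apply, hdh r (by omega) le_rfl, sub_zero]
end
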